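/- Let W be the Wiener measure on Ω and let α ∈ (0, 1/2]. Then for every ω̄ ∈ C_α^-, the upper local order satisfies overline-ord_loc W(ω̄) ≤ 2(α^{−1} − 1). -/

import Mathlib

open scoped ENNReal NNReal Topology
open Filter MeasureTheory Metric Set

noncomputable section

namespace Multifractal


/-- The `δ`-level Hausdorff pre-measure `H^h_δ` associated to a gauge `h`. -/
def hMeasAux {X : Type*} [MetricSpace X] (h : ℝ → ℝ) (δ : ℝ≥0∞) (E : Set X) : ℝ≥0∞ :=
  ⨅ (c : ℕ → X) (r : ℕ → ℝ) (_ : ∀ n, 0 < r n ∧ ENNReal.ofReal (r n) ≤ δ)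
    (_ : E ⊆ ⋃ n, Metric.ball (c n) (r n)), ∑' n, ENNReal.ofReal (h (r n))

/-- The `h`-Hausdorff measure. -/
def hMeas {X : Type*} [MetricSpace X] (h : ℝ → ℝ) (E : Set X) : ℝ≥0∞ :=
  ⨆ (δ : ℝ≥0∞) (_ : 0 < δ), hMeasAux h δ E

/-- `Ω`: continuous paths on `[0,1]` vanishing at `0`, with the uniform metric. -/
abbrev PathSpace : Type := {f : C(unitInterval, ℝ) // f 0 = 0}

instance : MeasurableSpace PathSpace := borel PathSpace
instance : BorelSpace PathSpace := ⟨rfl⟩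

/-- `μ` is a centered Gaussian process measure on path space with covariance `K`:
a probability measure under which every finite linear combination of coordinates
is a centered real Gaussian with the variance given by `K`. -/
def IsGaussianProcess (μ : Measure PathSpace) (K : unitInterval → unitInterval → ℝ) : Prop :=
  IsProbabilityMeasure μ ∧
  ∀ (n : ℕ) (t : Fin n → unitInterval) (c : Fin n → ℝ),
    Measure.map (fun ω : PathSpace => ∑ i, c i * ω.1 (t i)) μ =
      ProbabilityTheory.gaussianReal 0
        (Real.toNNReal (∑ i, ∑ j, c i * c j * K (t i) (t j)))

/-- `W` is the Wiener measure: the coordinate process is centered Gaussian with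
covariance `min s t`. -/
def IsWienerMeasure (W : Measure PathSpace) : Prop :=
  IsGaussianProcess W (fun s t => min (s : ℝ) (t : ℝ))

/-- `μ` is the law of fractional Brownian motion with Hurst parameter `H`. -/
def IsFBM (H : ℝ) (μ : Measure PathSpace) : Prop :=
  IsGaussianProcess μ (fun s t =>
    ((s : ℝ) ^ (2*H) + (t : ℝ) ^ (2*H) - |(t : ℝ) - (s : ℝ)| ^ (2*H)) / 2)

/-- Clamping of a real number into the unit interval. -/
def clampI (t : ℝ) : unitInterval :=
  ⟨min (max t 0) 1, Set.mem_Icc.mpr ⟨le_min (le_max_right _ _) zero_le_one, min_le_right _ _⟩⟩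

/-- The grid point `j/n` of the unit interval. -/
def gridPt (n j : ℕ) : unitInterval := clampI ((j : ℝ) / n)

/-- The discrete quadratic variation `Q_n(ω)`. -/
def Qvar (ω : PathSpace) (n : ℕ) : ℝ :=
  Real.sqrt ((1 / (n : ℝ)) *
    ∑ i ∈ Finset.range n, (ω.1 (gridPt n (i+1)) - ω.1 (gridPt n i)) ^ 2)

/-- Lower Orey exponent `q^-(ω)`. -/
def oreyLower (ω : PathSpace) : EReal :=
  liminf (fun n : ℕ => ((-Real.log (Qvar ω n) / Real.log n : ℝ) : EReal)) atTop

/-- Upper Orey exponent `q^+(ω)`. -/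
def oreyUpper (ω : PathSpace) : EReal :=
  limsup (fun n : ℕ => ((-Real.log (Qvar ω n) / Real.log n : ℝ) : EReal)) atTop

/-- The set `C_a` of `a`-Hölder paths. -/
def holderSet (a : ℝ) : Set PathSpace :=
  {ω | ∃ C : ℝ, ∀ x y : unitInterval, |ω.1 x - ω.1 y| ≤ C * |(x : ℝ) - (y : ℝ)| ^ a}

/-- The set `C_a^- = ⋂_{0<b<a} C_b` of nearly `a`-Hölder paths. -/
def holderMinus (a : ℝ) : Set PathSpace := ⋂ b ∈ Set.Ioo (0:ℝ) a, holderSet b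

/-- The set `C_q^crit` of critical `q`-Hölder paths: nearly `q`-Hölder paths whose
Orey exponent exists and equals `q`. -/
def holderCrit (q : ℝ) : Set PathSpace :=
  {ω | ω ∈ holderMinus q ∧ oreyLower ω = (q : EReal) ∧ oreyUpper ω = (q : EReal)}

/-- The set `Ω^crit` of critical Hölder paths. -/
def pathCrit : Set PathSpace := ⋃ q ∈ Set.Ioo (0:ℝ) 1, holderCrit q

/-- The lower local order of a measure `μ` on path space at `ω`. -/
def lowerLocOrd (μ : Measure PathSpace) (ω : PathSpace) : EReal :=
  liminf (fun ε : ℝ =>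
    ((Real.log (-Real.log ((μ (Metric.ball ω ε)).toReal)) / (-Real.log ε) : ℝ) : EReal))
    (𝓝[>] (0:ℝ))

/-- The upper local order of a measure `μ` on path space at `ω`. -/
def upperLocOrd (μ : Measure PathSpace) (ω : PathSpace) : EReal :=
  limsup (fun ε : ℝ =>
    ((Real.log (-Real.log ((μ (Metric.ball ω ε)).toReal)) / (-Real.log ε) : ℝ) : EReal))
    (𝓝[>] (0:ℝ))

/-- The Hausdorff order of a set of paths: `sup {α > 0 : H^{h_α}(A) = ∞}` where
`h_α(ε) = exp(-ε^{-α})`. -/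
def ordH (A : Set PathSpace) : ℝ≥0∞ :=
  ⨆ (α : ℝ) (_ : 0 < α ∧ hMeas (fun ε : ℝ => Real.exp (-(ε ^ (-α)))) A = ∞),
    ENNReal.ofReal α

/-- The level set `E(ξ)` of paths at which the local order of `μ` exists and
equals `ξ`. -/
def levelOrd (μ : Measure PathSpace) (ξ : ℝ) : Set PathSpace :=
  {ω | lowerLocOrd μ ω = (ξ : EReal) ∧ upperLocOrd μ ω = (ξ : EReal)}

/-- The cylinder `C_n(ω̄, ε)` around `ω̄` of depth `n` and radius `ε`. -/
def cylinder (ωb : PathSpace) (n : ℕ) (ε : ℝ) : Set PathSpace :=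
  {ω | ∀ j ∈ Finset.Icc 1 n, |ω.1 (gridPt n j) - ωb.1 (gridPt n j)| ≤ ε}

/-- The affine interpolation `L̄_j` of `ω̄` on `[(j-1)/n, j/n]`, evaluated at `t`. -/
def affInterp (ωb : PathSpace) (n j : ℕ) (t : ℝ) : ℝ :=
  ωb.1 (gridPt n (j-1)) +
    (t - ((j-1 : ℕ) : ℝ) / n) * n * (ωb.1 (gridPt n j) - ωb.1 (gridPt n (j-1)))

/-- The maximal deviation `Δ_n(ω̄)` of `ω̄` from its chords on the `1/n`-grid. -/
def chordDev (ωb : PathSpace) (n : ℕ) : ℝ :=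
  sSup {d : ℝ | ∃ j ∈ Finset.Icc 1 n, ∃ t ∈ Set.Icc (((j-1 : ℕ) : ℝ) / n) ((j : ℝ) / n),
    d = |ωb.1 (clampI t) - affInterp ωb n j t|}

/-!
Under the Wiener measure the Faber–Schauder coefficients of a path are independent centered
Gaussians, of variance `2 ^ (-(k + 2))` at level `k`. Those of a `β`-Hölder path `η` are
`O(q ^ k)` with `q = 2 ^ (-β)`. To stay within `O(q ^ m)` of `η` it suffices that a path have
coefficients within `q ^ (m + k)` of those of `η` at the levels `k ≤ m`, and at most `q ^ k` in
size at the levels `k > m`. As `2 * q ^ 2 > 1` for `β < 1 / 2`, each of the `O(2 ^ m)` constraints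
of the first kind has probability at least `exp (-O(m + (2 * q ^ 2) ^ m))`, whereas those of the
second kind fail with summable probabilities. Multiplying,
`W (B(η, O(q ^ m))) ≥ exp (-O((4 * q ^ 2) ^ m))`, and `4 * q ^ 2 = q ^ (-2 * (β⁻¹ - 1))`.
Finally let `β` increase to `α`.
-/

section Series

lemma hasSum_option {α M : Type*} [AddCommMonoid M] [TopologicalSpace M] [ContinuousAdd M]
    {f : Option α → M} {T : M} (hf : HasSum (fun a => f (some a)) T) :
    HasSum f (f none + T) := by
  have hnone : HasSum (fun x : ({none} : Set (Option α)) => f x) (f none) := by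
    simpa using hasSum_fintype fun x : ({none} : Set (Option α)) => f x
  exact hnone.add_isCompl (isCompl_range_some_none α).symm
    ((Option.some_injective α).hasSum_range_iff.2 hf)

lemma hasSum_ite_le {M : Type*} [AddCommGroup M] [TopologicalSpace M] [IsTopologicalAddGroup M]
    (u : ℕ → M) {w : ℕ → M} (m : ℕ) {T : M} (hw : HasSum (fun k => w (k + (m + 1))) T) :
    HasSum (fun k => if k ≤ m then u k else w k) (∑ k ∈ Finset.range (m + 1), u k + T) := by
  have hlow : ∑ k ∈ Finset.range (m + 1), (if k ≤ m then u k else w k) =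
      ∑ k ∈ Finset.range (m + 1), u k :=
    Finset.sum_congr rfl fun k hk => if_pos (Finset.mem_range_succ_iff.1 hk)
  rw [add_comm, ← hlow, ← hasSum_nat_add_iff (m + 1)]
  exact hw.congr_fun fun k => if_neg (by lia)

lemma summable_pow_mul_exp_neg_pow (b : ℝ) {c g : ℝ} (hc : 0 < c) (hg : 1 < g) :
    Summable fun k : ℕ => b ^ k * Real.exp (-(c * g ^ k)) := by
  have hratio : Tendsto (fun k : ℕ => ‖b * Real.exp (-(c * (g - 1) * g ^ k))‖) atTop (𝓝 0) := by
    have hexp : Tendsto (fun k : ℕ => Real.exp (-(c * (g - 1) * g ^ k))) atTop (𝓝 0) :=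
      Real.tendsto_exp_neg_atTop_nhds_zero.comp
        ((tendsto_pow_atTop_atTop_of_one_lt hg).const_mul_atTop (mul_pos hc (sub_pos.2 hg)))
    simpa using (hexp.const_mul b).norm
  refine summable_of_ratio_norm_eventually_le one_half_lt_one ?_
  filter_upwards [hratio.eventually_le_const one_half_pos] with k hk
  have hstep : b ^ (k + 1) * Real.exp (-(c * g ^ (k + 1))) =
      b * Real.exp (-(c * (g - 1) * g ^ k)) * (b ^ k * Real.exp (-(c * g ^ k))) := by
    rw [mul_mul_mul_comm, ← pow_succ', ← Real.exp_add]
    ring_nf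
  rw [hstep, norm_mul]
  gcongr

lemma add_one_le_mul_pow {g : ℝ} (hg : 1 < g) (m : ℕ) :
    (m : ℝ) + 1 ≤ ((g - 1)⁻¹ + 1) * g ^ m := by
  have hpos : 0 < g - 1 := sub_pos.2 hg
  have hbernoulli : 1 + (m : ℝ) * (g - 1) ≤ g ^ m := by
    simpa using one_add_mul_le_pow (a := g - 1) (by linarith) m
  have hm : (m : ℝ) ≤ (g - 1)⁻¹ * g ^ m := by
    rw [inv_mul_eq_div, le_div_iff₀ hpos]
    linarith
  linarith [one_le_pow₀ hg.le (n := m)]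

end Series

section Gaussian

open ProbabilityTheory

variable (μ : ℝ) {v : ℝ≥0}

lemma mul_gaussianPDF_le_gaussianReal_closedBall (hv : v ≠ 0) (a : ℝ) {r : ℝ} (hr : 0 ≤ r) :
    2 * r * ((√(2 * Real.pi * v))⁻¹ * Real.exp (-(|a - μ| + r) ^ 2 / (2 * v))) ≤
      (gaussianReal μ v).real (closedBall a r) := by
  have hpdf : ∀ x ∈ closedBall a r,
      (√(2 * Real.pi * v))⁻¹ * Real.exp (-(|a - μ| + r) ^ 2 / (2 * v)) ≤
        gaussianPDFReal μ v x := by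
    intro x hx
    have hdist : |x - μ| ≤ |a - μ| + r := by
      rw [add_comm]
      exact (abs_sub_le x a μ).trans (add_le_add_left (mem_closedBall.1 hx) _)
    rw [gaussianPDFReal, ← sq_abs (x - μ)]
    gcongr
  rw [Measure.real, gaussianReal_apply_eq_integral μ hv,
    ENNReal.toReal_ofReal (integral_nonneg fun x => gaussianPDFReal_nonneg _ _ _)]
  calc 2 * r * ((√(2 * Real.pi * v))⁻¹ * Real.exp (-(|a - μ| + r) ^ 2 / (2 * v)))
      = ∫ _ in closedBall a r,
          (√(2 * Real.pi * v))⁻¹ * Real.exp (-(|a - μ| + r) ^ 2 / (2 * v)) := by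
        rw [setIntegral_const, Real.volume_real_closedBall hr, smul_eq_mul]
    _ ≤ ∫ x in closedBall a r, gaussianPDFReal μ v x :=
        setIntegral_mono_on (integrableOn_const measure_closedBall_lt_top.ne)
          (integrable_gaussianPDFReal μ v).integrableOn measurableSet_closedBall hpdf

lemma mul_exp_le_gaussianReal_closedBall (hv : v ≠ 0) (hv1 : v ≤ 1) (a : ℝ) {r : ℝ}
    (hr : 0 ≤ r) :
    r * Real.exp (-1 - (|a - μ| + r) ^ 2 / (2 * v)) ≤
      (gaussianReal μ v).real (closedBall a r) := by
  have hsqrt : √(2 * Real.pi * v) ≤ 2 * Real.exp 1 := by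
    rw [Real.sqrt_le_left (by positivity)]
    calc 2 * Real.pi * v ≤ 2 * Real.pi :=
          mul_le_of_le_one_right (by positivity) (by exact_mod_cast hv1)
      _ ≤ (2 * Real.exp 1) ^ 2 := by nlinarith [Real.pi_lt_four, Real.add_one_le_exp 1]
  have hinv : Real.exp (-1) ≤ 2 * (√(2 * Real.pi * v))⁻¹ := by
    rw [Real.exp_neg, ← div_eq_mul_inv, inv_le_comm₀ (Real.exp_pos 1) (by positivity), inv_div]
    linarith
  calc r * Real.exp (-1 - (|a - μ| + r) ^ 2 / (2 * v))
      = r * Real.exp (-1) * Real.exp (-((|a - μ| + r) ^ 2 / (2 * v))) := by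
        rw [sub_eq_add_neg, Real.exp_add, mul_assoc]
    _ ≤ r * (2 * (√(2 * Real.pi * v))⁻¹) * Real.exp (-((|a - μ| + r) ^ 2 / (2 * v))) := by
        gcongr
    _ = 2 * r * ((√(2 * Real.pi * v))⁻¹ * Real.exp (-(|a - μ| + r) ^ 2 / (2 * v))) := by
        rw [neg_div]
        ring
    _ ≤ (gaussianReal μ v).real (closedBall a r) :=
        mul_gaussianPDF_le_gaussianReal_closedBall μ hv a hr

variable (v) in
lemma one_sub_le_gaussianReal_closedBall {r : ℝ} (hr : 0 ≤ r) :
    1 - 2 * Real.exp (-r ^ 2 / (2 * v)) ≤ (gaussianReal μ v).real (closedBall μ r) := by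
  have hsub : HasSubgaussianMGF (fun x => x - μ) v (gaussianReal μ v) := by
    have hmap := gaussianReal_map_sub_const (μ := μ) (v := v) μ
    rw [sub_self] at hmap
    refine ⟨fun t => ?_, fun t => by simp [mgf_gaussianReal hmap]⟩
    have hint := integrable_exp_mul_gaussianReal (μ := 0) (v := v) t
    rw [← hmap] at hint
    exact hint.comp_measurable (by fun_prop)
  have hcompl : (closedBall μ r)ᶜ ⊆ {x | r ≤ x - μ} ∪ {x | r ≤ (-fun x => x - μ) x} := by
    intro x hx
    rw [mem_compl_iff, mem_closedBall, Real.dist_eq, not_le] at hx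
    exact (lt_abs.1 hx).imp le_of_lt le_of_lt
  have htail := (measureReal_mono hcompl (measure_ne_top (gaussianReal μ v) _)).trans
    (measureReal_union_le _ _)
  rw [probReal_compl_eq_one_sub measurableSet_closedBall] at htail
  linarith [hsub.measure_ge_le hr, hsub.neg.measure_ge_le hr]

lemma exp_neg_two_mul_le_one_sub {p : ℝ} (hp : 0 ≤ p) (hp' : p ≤ 1 / 2) :
    Real.exp (-(2 * p)) ≤ 1 - p := by
  have hpos : 0 < 1 - p := by linarith
  rw [← Real.le_log_iff_exp_le hpos]
  refine le_trans ?_ (Real.one_sub_inv_le_log_of_pos hpos)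
  have hinv : (1 - p)⁻¹ ≤ 1 + 2 * p := by
    rw [inv_le_iff_one_le_mul₀ hpos]
    nlinarith
  linarith

lemma exp_neg_exp_le_gaussianReal_closedBall {r : ℝ} (hr : 0 ≤ r) (hrv : 2 ≤ r ^ 2 / (2 * v)) :
    Real.exp (-(4 * Real.exp (-(r ^ 2 / (2 * v))))) ≤ (gaussianReal μ v).real (closedBall μ r) := by
  have htail : Real.exp (-(r ^ 2 / (2 * v))) ≤ 1 / 4 := by
    have h4 : (4 : ℝ) ≤ Real.exp 2 := by
      rw [show (2 : ℝ) = 1 + 1 by norm_num, Real.exp_add]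
      nlinarith [Real.add_one_le_exp 1]
    calc Real.exp (-(r ^ 2 / (2 * v))) ≤ Real.exp (-2) := Real.exp_le_exp.2 (neg_le_neg hrv)
      _ ≤ 1 / 4 := by
        rw [Real.exp_neg, one_div]
        exact inv_anti₀ four_pos h4
  calc Real.exp (-(4 * Real.exp (-(r ^ 2 / (2 * v)))))
      = Real.exp (-(2 * (2 * Real.exp (-(r ^ 2 / (2 * v)))))) := by ring_nf
    _ ≤ 1 - 2 * Real.exp (-(r ^ 2 / (2 * v))) :=
        exp_neg_two_mul_le_one_sub (by positivity) (by linarith)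
    _ ≤ (gaussianReal μ v).real (closedBall μ r) := by
        rw [← neg_div]
        exact one_sub_le_gaussianReal_closedBall μ v hr

end Gaussian

section Independence

open ProbabilityTheory

variable {Ω ι : Type*} {mΩ : MeasurableSpace Ω} {P : Measure Ω}

lemma iIndepFun_of_isGaussianProcess {X : ι → Ω → ℝ}
    (hX : ProbabilityTheory.IsGaussianProcess X P)
    (hcov : Pairwise fun i j => cov[X i, X j; P] = 0) : iIndepFun X P := by
  rw [iIndepFun_iff_finset]
  exact fun s => (hX.hasGaussianLaw s).iIndepFun_of_covariance_eq_zero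
    fun i j hij => hcov (Subtype.coe_ne_coe.2 hij)

lemma exp_neg_le_measureReal_iInter_preimage [Countable ι] {β : ι → Type*}
    [∀ i, MeasurableSpace (β i)] {X : ∀ i, Ω → β i} (hX : iIndepFun X P)
    (hXm : ∀ i, AEMeasurable (X i) P) {S : ∀ i, Set (β i)} (hS : ∀ i, MeasurableSet (S i))
    {a : ι → ℝ} {T : ℝ} (ha : HasSum a T)
    (h : ∀ i, Real.exp (-a i) ≤ P.real (X i ⁻¹' S i)) :
    Real.exp (-T) ≤ P.real (⋂ i, X i ⁻¹' S i) := by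
  have := hX.isProbabilityMeasure
  have hfin : ∀ s : Finset ι, Real.exp (-∑ i ∈ s, a i) ≤ P.real (⋂ i ∈ s, X i ⁻¹' S i) := by
    intro s
    rw [Measure.real, hX.measure_inter_preimage_eq_mul s fun i _ => hS i, ENNReal.toReal_prod,
      ← Finset.sum_neg_distrib, Real.exp_sum]
    exact Finset.prod_le_prod (fun _ _ => (Real.exp_pos _).le) fun i _ => h i
  have hlim : Tendsto (fun s : Finset ι => P.real (⋂ i ∈ s, X i ⁻¹' S i)) atTop
      (𝓝 (P.real (⋂ i, X i ⁻¹' S i))) := by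
    rw [iInter_eq_iInter_finset]
    refine (ENNReal.continuousAt_toReal (measure_ne_top P _)).tendsto.comp
      (tendsto_measure_iInter_atTop (fun s => ?_) ?_ ⟨∅, measure_ne_top P _⟩)
    · exact .biInter s.countable_toSet fun i _ => (hXm i).nullMeasurableSet_preimage (hS i)
    · exact fun s t hst => biInter_subset_biInter_left hst
  exact le_of_tendsto_of_tendsto' ((Real.continuous_exp.tendsto _).comp (Tendsto.neg ha)) hlim hfin

end Independence

section CoordinateMaps

open ProbabilityTheory

lemma measurable_eval (t : unitInterval) : Measurable fun ω : PathSpace => ω.1 t :=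
  ((continuous_eval_const t).comp continuous_subtype_val).measurable

namespace IsGaussianProcess

variable {μ : Measure PathSpace} {K : unitInterval → unitInterval → ℝ}

lemma isGaussianProcess_eval (hμ : IsGaussianProcess μ K) :
    ProbabilityTheory.IsGaussianProcess (fun (t : unitInterval) (ω : PathSpace) => ω.1 t) μ where
  hasGaussianLaw I := by
    have hmeas : Measurable fun ω : PathSpace => I.restrict fun t => ω.1 t :=
      measurable_pi_lambda _ fun t => measurable_eval t.1
    refine ⟨isGaussian_of_map_eq_gaussianReal fun L => ?_⟩
    let e := I.equivFin.symm
    have hL : L ∘ (fun ω : PathSpace => I.restrict fun t => ω.1 t) =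
        fun ω => ∑ i, L (fun t => if e i = t then 1 else 0) * ω.1 (e i) := by
      ext ω
      rw [e.sum_comp fun s : I => L (fun t => if s = t then 1 else 0) * ω.1 s]
      exact (L.toLinearMap.pi_apply_eq_sum_univ _).trans
        (Finset.sum_congr rfl fun _ _ => mul_comm _ _)
    rw [Measure.map_map (by fun_prop) hmeas, hL]
    exact ⟨0, _, hμ.2 I.card _ _⟩

lemma memLp_eval (hμ : IsGaussianProcess μ K) (t : unitInterval) :
    MemLp (fun ω : PathSpace => ω.1 t) 2 μ :=
  (hμ.isGaussianProcess_eval.hasGaussianLaw_eval t).memLp_two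

lemma hasLaw_sum (hμ : IsGaussianProcess μ K) {n : ℕ} (t : Fin n → unitInterval)
    (c : Fin n → ℝ) :
    HasLaw (fun ω : PathSpace => ∑ i, c i * ω.1 (t i))
      (gaussianReal 0 (∑ i, ∑ j, c i * c j * K (t i) (t j)).toNNReal) μ where
  aemeasurable := (Finset.measurable_sum _ fun _ _ => (measurable_eval _).const_mul _).aemeasurable
  map_eq := hμ.2 n t c

lemma integral_eval (hμ : IsGaussianProcess μ K) (t : unitInterval) :
    ∫ ω, ω.1 t ∂μ = 0 := by
  simpa using (hμ.hasLaw_sum (fun _ : Fin 1 => t) fun _ => 1).integral_eq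

lemma variance_eval (hμ : IsGaussianProcess μ K) {t : unitInterval} (ht : 0 ≤ K t t) :
    Var[fun ω : PathSpace => ω.1 t; μ] = K t t := by
  simpa [ht] using (hμ.hasLaw_sum (fun _ : Fin 1 => t) fun _ => 1).variance_eq

lemma covariance_eval (hμ : IsGaussianProcess μ K) {s t : unitInterval}
    (hsymm : K t s = K s t) (hs : 0 ≤ K s s) (ht : 0 ≤ K t t)
    (hst : 0 ≤ K s s + 2 * K s t + K t t) :
    cov[fun ω : PathSpace => ω.1 s, fun ω => ω.1 t; μ] = K s t := by
  have := hμ.1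
  have hsum : Var[fun ω : PathSpace => ω.1 s + ω.1 t; μ] = K s s + 2 * K s t + K t t := by
    have hvar := (hμ.hasLaw_sum ![s, t] fun _ => 1).variance_eq
    simp only [Fin.sum_univ_two, one_mul, Matrix.cons_val_zero, Matrix.cons_val_one, hsymm,
      variance_id_gaussianReal] at hvar
    rw [hvar, Real.coe_toNNReal _ (by linarith)]
    ring
  rw [variance_fun_add (hμ.memLp_eval s) (hμ.memLp_eval t), hμ.variance_eval hs,
    hμ.variance_eval ht] at hsum
  linarith

end IsGaussianProcess

lemma IsWienerMeasure.covariance_eval {W : Measure PathSpace} (hW : IsWienerMeasure W)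
    (s t : unitInterval) :
    cov[fun ω : PathSpace => ω.1 s, fun ω => ω.1 t; W] = min (s : ℝ) t := by
  have hs := s.2.1
  have ht := t.2.1
  exact IsGaussianProcess.covariance_eval hW (min_comm _ _) (by positivity) (by positivity)
    (by positivity)

end CoordinateMaps

section GridPoints

lemma coe_gridPt {n j : ℕ} (h : j ≤ n) : (gridPt n j : ℝ) = j / n := by
  have hnonneg : (0 : ℝ) ≤ (j : ℝ) / n := by positivity
  have hle : (j : ℝ) / n ≤ 1 := div_le_one_of_le₀ (by exact_mod_cast h) (by positivity)
  simp [gridPt, clampI, hnonneg, hle]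

lemma gridPt_self {n : ℕ} (hn : n ≠ 0) : gridPt n n = 1 := by
  ext
  rw [coe_gridPt le_rfl, div_self (Nat.cast_ne_zero.2 hn), Icc.coe_one]

lemma gridPt_zero_right (n : ℕ) : gridPt n 0 = 0 := by
  ext
  rw [coe_gridPt n.zero_le, Nat.cast_zero, zero_div, Icc.coe_zero]

lemma gridPt_mul_mul (n j : ℕ) {d : ℕ} (hd : d ≠ 0) : gridPt (d * n) (d * j) = gridPt n j := by
  rw [gridPt, gridPt, Nat.cast_mul, Nat.cast_mul, mul_div_mul_left _ _ (Nat.cast_ne_zero.2 hd)]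

lemma gridPt_two_pow_succ_two_mul (k j : ℕ) :
    gridPt (2 ^ (k + 1)) (2 * j) = gridPt (2 ^ k) j := by
  rw [pow_succ', gridPt_mul_mul _ _ two_ne_zero]

lemma tendsto_gridPt_floor (t : unitInterval) :
    Tendsto (fun n : ℕ => gridPt n ⌊(t : ℝ) * n⌋₊) atTop (𝓝 t) := by
  rw [tendsto_subtype_rng]
  refine ((tendsto_nat_floor_mul_div_atTop t.2.1).comp
    tendsto_natCast_atTop_atTop).congr fun n => ?_
  refine (coe_gridPt (Nat.floor_le_of_le ?_)).symm
  exact mul_le_of_le_one_left n.cast_nonneg t.2.2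

end GridPoints

section FaberSchauder

open ProbabilityTheory

/-- The second difference of a path over three consecutive points of the `n`-grid, starting with
the `j`-th: the deviation at the middle point from the chord through the outer two. -/
def chordGap (n j : ℕ) (ω : PathSpace) : ℝ :=
  ω.1 (gridPt n (j + 1)) - 2⁻¹ * ω.1 (gridPt n j) - 2⁻¹ * ω.1 (gridPt n (j + 2))

lemma IsGaussianProcess.covariance_chordGap_left {μ : Measure PathSpace}
    {K : unitInterval → unitInterval → ℝ} (hμ : IsGaussianProcess μ K) {X : PathSpace → ℝ}
    (hX : MemLp X 2 μ) (n j : ℕ) :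
    cov[chordGap n j, X; μ] = cov[fun ω => ω.1 (gridPt n (j + 1)), X; μ] -
      2⁻¹ * cov[fun ω => ω.1 (gridPt n j), X; μ] -
      2⁻¹ * cov[fun ω => ω.1 (gridPt n (j + 2)), X; μ] := by
  have := hμ.1
  have hm := hμ.memLp_eval
  have hhalf : ∀ s t, MemLp (fun ω : PathSpace => ω.1 s - 2⁻¹ * ω.1 t) 2 μ :=
    fun s t => (hm s).sub ((hm t).const_mul _)
  unfold chordGap
  rw [covariance_fun_sub_left (hhalf _ _) ((hm _).const_mul _) hX,
    covariance_fun_sub_left (hm _) ((hm _).const_mul _) hX,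
    covariance_const_mul_left, covariance_const_mul_left]

lemma IsGaussianProcess.memLp_chordGap {μ : Measure PathSpace}
    {K : unitInterval → unitInterval → ℝ} (hμ : IsGaussianProcess μ K) (n j : ℕ) :
    MemLp (chordGap n j) 2 μ :=
  ((hμ.memLp_eval _).sub ((hμ.memLp_eval _).const_mul _)).sub ((hμ.memLp_eval _).const_mul _)

namespace IsWienerMeasure

variable {W : Measure PathSpace}

-- `min` is the Green function of the second difference operator.
lemma covariance_eval_chordGap (hW : IsWienerMeasure W) {n i j : ℕ} (hi : i ≤ n)
    (hj : j + 2 ≤ n) :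
    cov[fun ω => ω.1 (gridPt n i), chordGap n j; W] =
      if i = j + 1 then (2 * (n : ℝ))⁻¹ else 0 := by
  rw [covariance_comm, IsGaussianProcess.covariance_chordGap_left hW
      (IsGaussianProcess.memLp_eval hW _), hW.covariance_eval, hW.covariance_eval,
    hW.covariance_eval, coe_gridPt hi, coe_gridPt hj, coe_gridPt (by lia), coe_gridPt (by lia)]
  simp only [min_div_div_right n.cast_nonneg, ← Nat.cast_min]
  rcases lt_trichotomy i (j + 1) with h | rfl | h
  · rw [if_neg h.ne, min_eq_right h.le, min_eq_right (by lia), min_eq_right (by lia)]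
    ring
  · rw [if_pos rfl, min_self, min_eq_left (by lia), min_eq_right (by lia), mul_inv]
    push_cast
    ring
  · rw [if_neg h.ne', min_eq_left (by lia), min_eq_left (by lia), min_eq_left (by lia)]
    push_cast
    ring

lemma covariance_eval_chordGap_eq_zero (hW : IsWienerMeasure W) {k i l j : ℕ} (hlk : l ≤ k)
    (hj : j ≤ 2 ^ l) (hi : i < 2 ^ k) :
    cov[fun ω => ω.1 (gridPt (2 ^ l) j), chordGap (2 ^ (k + 1)) (2 * i); W] = 0 := by
  obtain ⟨d, rfl⟩ := Nat.exists_eq_add_of_le' hlk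
  have hgrid : gridPt (2 ^ l) j = gridPt (2 ^ (d + l + 1)) (2 * (2 ^ d * j)) := by
    rw [gridPt_two_pow_succ_two_mul, pow_add, gridPt_mul_mul _ _ (by positivity)]
  have hle : 2 ^ d * j ≤ 2 ^ (d + l) := by
    rw [pow_add]
    exact Nat.mul_le_mul_left _ hj
  rw [hgrid, hW.covariance_eval_chordGap (by lia) (by lia), if_neg (by lia)]

lemma covariance_chordGap_chordGap_self (hW : IsWienerMeasure W) {n j : ℕ} (hj : j + 2 ≤ n) :
    cov[chordGap n j, chordGap n j; W] = (2 * (n : ℝ))⁻¹ := by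
  rw [IsGaussianProcess.covariance_chordGap_left hW (IsGaussianProcess.memLp_chordGap hW n j),
    hW.covariance_eval_chordGap (by lia) hj, hW.covariance_eval_chordGap (by lia) hj,
    hW.covariance_eval_chordGap hj hj, if_pos rfl, if_neg (by lia), if_neg (by lia)]
  ring

lemma covariance_chordGap_chordGap_of_lt (hW : IsWienerMeasure W) {k i l j : ℕ} (hlk : l < k)
    (hj : j < 2 ^ l) (hi : i < 2 ^ k) :
    cov[chordGap (2 ^ (l + 1)) (2 * j), chordGap (2 ^ (k + 1)) (2 * i); W] = 0 := by
  rw [IsGaussianProcess.covariance_chordGap_left hW (IsGaussianProcess.memLp_chordGap hW _ _),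
    hW.covariance_eval_chordGap_eq_zero hlk (by lia) hi,
    hW.covariance_eval_chordGap_eq_zero hlk (by lia) hi,
    hW.covariance_eval_chordGap_eq_zero hlk (by lia) hi]
  ring

lemma covariance_chordGap_chordGap_of_ne (hW : IsWienerMeasure W) {k i j : ℕ} (hij : j ≠ i)
    (hj : j < 2 ^ k) (hi : i < 2 ^ k) :
    cov[chordGap (2 ^ (k + 1)) (2 * j), chordGap (2 ^ (k + 1)) (2 * i); W] = 0 := by
  rw [IsGaussianProcess.covariance_chordGap_left hW (IsGaussianProcess.memLp_chordGap hW _ _),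
    hW.covariance_eval_chordGap (by lia) (by lia), hW.covariance_eval_chordGap (by lia) (by lia),
    hW.covariance_eval_chordGap (by lia) (by lia), if_neg (by lia), if_neg (by lia),
    if_neg (by lia)]
  ring

end IsWienerMeasure
/-- Indices of the Faber–Schauder functions on the unit interval: `none` is the identity function
and `some ⟨k, i⟩` is the tent over the dyadic interval `[i / 2 ^ k, (i + 1) / 2 ^ k]`. -/
abbrev SchauderIndex : Type := Option (Σ k : ℕ, Fin (2 ^ k))

/-- The dyadic level of a Faber–Schauder function; the identity function is put at level `0`, so
that there are two indices of level `0` and `2 ^ k` of level `k > 0`. -/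
def SchauderIndex.level : SchauderIndex → ℕ
  | none => 0
  | some p => p.1

/-- The coefficient of a path in the Faber–Schauder system, for tents normalised to have
height one. -/
def schauderCoeff : SchauderIndex → PathSpace → ℝ
  | none => fun ω => ω.1 1
  | some p => chordGap (2 ^ (p.1 + 1)) (2 * p.2)

/-- The variance of a Faber–Schauder coefficient under the Wiener measure. -/
def schauderVar : SchauderIndex → ℝ≥0
  | none => 1
  | some p => (2 ^ (p.1 + 2))⁻¹

lemma schauderVar_ne_zero (p : SchauderIndex) : schauderVar p ≠ 0 := by
  cases p <;> simp [schauderVar]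

lemma schauderVar_le_one (p : SchauderIndex) : schauderVar p ≤ 1 := by
  cases p with
  | none => exact le_rfl
  | some p => exact inv_le_one_of_one_le₀ (one_le_pow₀ one_le_two)

lemma inv_two_pow_le_schauderVar (p : SchauderIndex) :
    ((2 : ℝ) ^ (p.level + 2))⁻¹ ≤ schauderVar p := by
  cases p with
  | none => norm_num [SchauderIndex.level, schauderVar]
  | some p => simp [SchauderIndex.level, schauderVar]

lemma measurable_schauderCoeff (p : SchauderIndex) : Measurable (schauderCoeff p) := by
  cases p with
  | none => exact measurable_eval 1
  | some p =>
    exact ((measurable_eval _).sub ((measurable_eval _).const_mul _)).sub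
      ((measurable_eval _).const_mul _)

lemma IsGaussianProcess.isGaussianProcess_schauderCoeff {μ : Measure PathSpace}
    {K : unitInterval → unitInterval → ℝ} (hμ : IsGaussianProcess μ K) :
    ProbabilityTheory.IsGaussianProcess schauderCoeff μ := by
  refine hμ.isGaussianProcess_eval.of_isGaussianProcess fun p => ?_
  classical
  cases p with
  | none => exact ⟨{1}, .proj ⟨1, by simp⟩, fun ω => rfl⟩
  | some p =>
    let t : Fin 3 → unitInterval := fun i => gridPt (2 ^ (p.1 + 1)) (2 * p.2 + i)
    let π : ∀ i, (Finset.univ.image t → ℝ) →L[ℝ] ℝ := fun i => .proj ⟨t i, by simp⟩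
    exact ⟨Finset.univ.image t, π 1 - (2⁻¹ : ℝ) • π 0 - (2⁻¹ : ℝ) • π 2, fun ω => rfl⟩

lemma IsGaussianProcess.integral_schauderCoeff {μ : Measure PathSpace}
    {K : unitInterval → unitInterval → ℝ} (hμ : IsGaussianProcess μ K) (p : SchauderIndex) :
    ∫ ω, schauderCoeff p ω ∂μ = 0 := by
  have := hμ.1
  cases p with
  | none => exact hμ.integral_eval 1
  | some p =>
    have hint : ∀ t, Integrable (fun ω : PathSpace => ω.1 t) μ :=
      fun t => (hμ.memLp_eval t).integrable one_le_two
    have hhalf : ∀ s t, Integrable (fun ω : PathSpace => ω.1 s - 2⁻¹ * ω.1 t) μ :=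
      fun s t => (hint s).sub ((hint t).const_mul _)
    simp only [schauderCoeff, chordGap]
    rw [integral_sub (hhalf _ _) ((hint _).const_mul _),
      integral_sub (hint _) ((hint _).const_mul _)]
    simp only [integral_const_mul, hμ.integral_eval, mul_zero, sub_zero]

namespace IsWienerMeasure

variable {W : Measure PathSpace}

lemma covariance_schauderCoeff_none (hW : IsWienerMeasure W) (p : Σ k : ℕ, Fin (2 ^ k)) :
    cov[schauderCoeff none, schauderCoeff (some p); W] = 0 := by
  have hone : schauderCoeff none = fun ω => ω.1 (gridPt (2 ^ 0) 1) := by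
    rw [pow_zero, gridPt_self one_ne_zero, schauderCoeff]
  rw [hone]
  exact hW.covariance_eval_chordGap_eq_zero p.1.zero_le le_rfl p.2.2

lemma covariance_schauderCoeff_some (hW : IsWienerMeasure W) {p p' : Σ k : ℕ, Fin (2 ^ k)}
    (hp : p ≠ p') : cov[schauderCoeff (some p), schauderCoeff (some p'); W] = 0 := by
  obtain ⟨k, i⟩ := p
  obtain ⟨l, j⟩ := p'
  rcases lt_trichotomy k l with h | rfl | h
  · exact hW.covariance_chordGap_chordGap_of_lt h i.2 j.2
  · exact hW.covariance_chordGap_chordGap_of_ne (by simpa [Fin.val_inj] using hp) i.2 j.2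
  · rw [covariance_comm]
    exact hW.covariance_chordGap_chordGap_of_lt h j.2 i.2

lemma iIndepFun_schauderCoeff (hW : IsWienerMeasure W) : iIndepFun schauderCoeff W := by
  refine iIndepFun_of_isGaussianProcess
    (IsGaussianProcess.isGaussianProcess_schauderCoeff hW) fun p p' hp => ?_
  cases p with
  | none => cases p' with
    | none => exact absurd rfl hp
    | some p' => exact hW.covariance_schauderCoeff_none p'
  | some p => cases p' with
    | none =>
      rw [covariance_comm]
      exact hW.covariance_schauderCoeff_none p
    | some p' => exact hW.covariance_schauderCoeff_some (mt (congrArg some) hp)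

lemma variance_schauderCoeff (hW : IsWienerMeasure W) (p : SchauderIndex) :
    Var[schauderCoeff p; W] = schauderVar p := by
  cases p with
  | none =>
    exact (IsGaussianProcess.variance_eval hW (by simp)).trans (by simp [schauderVar])
  | some p =>
    have hp : 2 * (p.2 : ℕ) + 2 ≤ 2 ^ (p.1 + 1) := by lia
    rw [← covariance_self (measurable_schauderCoeff _).aemeasurable, schauderCoeff,
      hW.covariance_chordGap_chordGap_self hp]
    simp [schauderVar, pow_succ, mul_comm]

lemma map_schauderCoeff (hW : IsWienerMeasure W) (p : SchauderIndex) :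
    W.map (schauderCoeff p) = gaussianReal 0 (schauderVar p) := by
  have hlaw := (IsGaussianProcess.isGaussianProcess_schauderCoeff hW).hasGaussianLaw_eval p
  rw [hlaw.map_eq_gaussianReal, IsGaussianProcess.integral_schauderCoeff hW,
    hW.variance_schauderCoeff, Real.toNNReal_coe]

end IsWienerMeasure

lemma hasSum_level {a : ℕ → ℝ} (ha : ∀ k, 0 ≤ a k) {T : ℝ}
    (hT : HasSum (fun k => 2 ^ k * a k) T) :
    HasSum (fun p : SchauderIndex => a p.level) (a 0 + T) := by
  have hfiber : ∀ k : ℕ, HasSum (fun _ : Fin (2 ^ k) => a k) (2 ^ k * a k) := fun k => by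
    simpa using hasSum_fintype fun _ : Fin (2 ^ k) => a k
  have hsome : HasSum (fun p : Σ k : ℕ, Fin (2 ^ k) => a p.1) T := by
    have hsummable : Summable fun p : Σ k : ℕ, Fin (2 ^ k) => a p.1 :=
      (summable_sigma_of_nonneg fun p => ha p.1).2
        ⟨fun k => (hfiber k).summable, hT.summable.congr fun k => (hfiber k).tsum_eq.symm⟩
    rw [← (hsummable.hasSum.sigma hfiber).unique hT]
    exact hsummable.hasSum
  exact hasSum_option hsome

lemma abs_sub_gridPt_le {ω η : PathSpace} {d : ℕ → ℝ}
    (h : ∀ p : SchauderIndex, |schauderCoeff p ω - schauderCoeff p η| ≤ d p.level) {K j : ℕ}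
    (hj : j ≤ 2 ^ K) :
    |ω.1 (gridPt (2 ^ K) j) - η.1 (gridPt (2 ^ K) j)| ≤ d 0 + ∑ k ∈ Finset.range K, d k := by
  induction K generalizing j with
  | zero =>
    rw [Finset.sum_range_zero, add_zero]
    obtain rfl | rfl : j = 0 ∨ j = 1 := by lia
    · rw [gridPt_zero_right, ω.2, η.2, sub_zero, abs_zero]
      exact (abs_nonneg _).trans (h none)
    · rw [pow_zero, gridPt_self one_ne_zero]
      exact h none
  | succ K ih =>
    rw [Finset.sum_range_succ, ← add_assoc]
    obtain ⟨i, rfl | rfl⟩ := j.even_or_odd'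
    · have hdK : 0 ≤ d K := (abs_nonneg _).trans (h (some ⟨K, 0⟩))
      rw [gridPt_two_pow_succ_two_mul]
      exact (ih (by lia)).trans (le_add_of_nonneg_right hdK)
    · have hleft := abs_le.1 (ih (j := i) (by lia))
      have hright := abs_le.1 (ih (j := i + 1) (by lia))
      have hgap : |chordGap (2 ^ (K + 1)) (2 * i) ω - chordGap (2 ^ (K + 1)) (2 * i) η| ≤ d K :=
        h (some ⟨K, i, by lia⟩)
      rw [chordGap, chordGap, gridPt_two_pow_succ_two_mul, show 2 * i + 2 = 2 * (i + 1) by ring,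
        gridPt_two_pow_succ_two_mul, abs_le] at hgap
      rw [abs_le]
      constructor <;> linarith

lemma dist_le_of_abs_schauderCoeff_sub_le {ω η : PathSpace} {d : ℕ → ℝ} {T : ℝ}
    (h : ∀ p : SchauderIndex, |schauderCoeff p ω - schauderCoeff p η| ≤ d p.level)
    (hT : HasSum d T) : dist ω η ≤ d 0 + T := by
  have hd : ∀ k, 0 ≤ d k := fun k => (abs_nonneg _).trans (h (some ⟨k, 0⟩))
  rw [Subtype.dist_eq, ContinuousMap.dist_le (add_nonneg (hd 0) (hT.nonneg hd))]
  intro t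
  have hdense : Tendsto (fun K : ℕ => gridPt (2 ^ K) ⌊(t : ℝ) * ((2 ^ K : ℕ) : ℝ)⌋₊) atTop (𝓝 t) :=
    (tendsto_gridPt_floor t).comp (tendsto_pow_atTop_atTop_of_one_lt one_lt_two)
  have hcont : Continuous fun s => dist (ω.1 s) (η.1 s) := by fun_prop
  refine le_of_tendsto' ((hcont.tendsto t).comp hdense) fun K => ?_
  have hfloor : ⌊(t : ℝ) * ((2 ^ K : ℕ) : ℝ)⌋₊ ≤ 2 ^ K :=
    Nat.floor_le_of_le (mul_le_of_le_one_left (Nat.cast_nonneg _) t.2.2)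
  exact (abs_sub_gridPt_le h hfloor).trans
    (add_le_add_right (sum_le_hasSum _ (fun k _ => hd k) hT) _)

end FaberSchauder

section SmallBall

open ProbabilityTheory

variable {η : PathSpace} {C q : ℝ} {m : ℕ}

/-- The constraints on Faber–Schauder coefficients that force a path into a ball of radius of order
`q ^ m` around `η`: up to level `m` they follow the coefficients of `η`, beyond it they are
small. -/
def schauderBox (η : PathSpace) (q : ℝ) (m : ℕ) (p : SchauderIndex) : Set ℝ :=
  if p.level ≤ m then closedBall (schauderCoeff p η) (q ^ (m + p.level))
  else closedBall 0 (q ^ p.level)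

/-- An upper bound for minus the logarithm of the Gaussian probability of the `schauderBox`
constraint at level `k`, for `η` with coefficients bounded by `C * q ^ k`. -/
def schauderBoxCost (C q : ℝ) (m k : ℕ) : ℝ :=
  if k ≤ m then m + 1 + 2 * (C + 1) ^ 2 * (2 * q ^ 2) ^ m else 4 * Real.exp (-(2 * (2 * q ^ 2) ^ k))

lemma measurableSet_schauderBox (η : PathSpace) (q : ℝ) (m : ℕ) (p : SchauderIndex) :
    MeasurableSet (schauderBox η q m p) := by
  unfold schauderBox
  split_ifs <;> exact measurableSet_closedBall

lemma schauderBoxCost_nonneg (C q : ℝ) (m k : ℕ) : 0 ≤ schauderBoxCost C q m k := by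
  unfold schauderBoxCost
  split_ifs <;> positivity

lemma abs_schauderCoeff_sub_le_of_mem_schauderBox {ω : PathSpace} {p : SchauderIndex}
    (hη : |schauderCoeff p η| ≤ C * q ^ p.level)
    (hω : schauderCoeff p ω ∈ schauderBox η q m p) :
    |schauderCoeff p ω - schauderCoeff p η| ≤
      if p.level ≤ m then q ^ m * q ^ p.level else (C + 1) * q ^ p.level := by
  unfold schauderBox at hω
  split_ifs at hω ⊢
  · rwa [mem_closedBall, Real.dist_eq, pow_add] at hω
  · rw [mem_closedBall_zero_iff, Real.norm_eq_abs] at hω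
    linarith [abs_sub (schauderCoeff p ω) (schauderCoeff p η)]

lemma dist_le_of_mem_schauderBox (hq₀ : 0 ≤ q) (hq₁ : q < 1)
    (hη : ∀ p, |schauderCoeff p η| ≤ C * q ^ p.level) {ω : PathSpace}
    (hω : ∀ p, schauderCoeff p ω ∈ schauderBox η q m p) :
    dist ω η ≤ (1 + (C + 2) / (1 - q)) * q ^ m := by
  have hC : 0 ≤ C := by simpa [SchauderIndex.level] using (abs_nonneg _).trans (hη none)
  have hgeom := hasSum_geometric_of_lt_one hq₀ hq₁
  have htail : HasSum (fun k => (C + 1) * q ^ (k + (m + 1)))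
      ((C + 1) * (q ^ (m + 1) * (1 - q)⁻¹)) :=
    ((hgeom.mul_left (q ^ (m + 1))).mul_left (C + 1)).congr_fun fun k => by ring
  have hlow : ∑ k ∈ Finset.range (m + 1), q ^ m * q ^ k ≤ q ^ m * (1 - q)⁻¹ := by
    rw [← Finset.mul_sum]
    exact mul_le_mul_of_nonneg_left (sum_le_hasSum _ (fun k _ => by positivity) hgeom)
      (by positivity)
  have hdist := dist_le_of_abs_schauderCoeff_sub_le
    (d := fun k => if k ≤ m then q ^ m * q ^ k else (C + 1) * q ^ k)
    (fun p => abs_schauderCoeff_sub_le_of_mem_schauderBox (hη p) (hω p))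
    (hasSum_ite_le (fun k => q ^ m * q ^ k) m htail)
  simp only [m.zero_le, if_true, pow_zero, mul_one] at hdist
  have : 0 ≤ (1 - q)⁻¹ := inv_nonneg.2 (sub_nonneg.2 hq₁.le)
  have hpow : q ^ (m + 1) ≤ q ^ m := pow_le_pow_of_le_one hq₀ hq₁.le m.le_succ
  calc dist ω η
      ≤ q ^ m + (∑ k ∈ Finset.range (m + 1), q ^ m * q ^ k +
          (C + 1) * (q ^ (m + 1) * (1 - q)⁻¹)) := hdist
    _ ≤ q ^ m + (q ^ m * (1 - q)⁻¹ + (C + 1) * (q ^ m * (1 - q)⁻¹)) := by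
        gcongr
    _ = (1 + (C + 2) / (1 - q)) * q ^ m := by ring

lemma exp_neg_natCast_le_pow (hq₀ : 0 ≤ q) (hq₁ : q ≤ 1) (hq₂ : 1 ≤ 2 * q ^ 2) {k : ℕ}
    (hk : k ≤ m) : Real.exp (-m) ≤ q ^ (m + k) := by
  have hbase : Real.exp (-1) ≤ q ^ 2 := by
    rw [Real.exp_neg, inv_le_comm₀ (Real.exp_pos 1) (by linarith)]
    calc (q ^ 2)⁻¹ ≤ 2 := by
          rw [inv_le_iff_one_le_mul₀ (by linarith)]
          linarith
      _ ≤ Real.exp 1 := by linarith [Real.add_one_le_exp 1]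
  calc Real.exp (-m) = Real.exp (-1) ^ m := by rw [← Real.exp_nat_mul, mul_neg_one]
    _ ≤ (q ^ 2) ^ m := by gcongr
    _ = q ^ (m + m) := by rw [← pow_mul, two_mul]
    _ ≤ q ^ (m + k) := pow_le_pow_of_le_one hq₀ hq₁ (by lia)

lemma exp_neg_le_gaussianReal_closedBall_of_level_le (hC : 0 ≤ C) (hq₀ : 0 ≤ q) (hq₁ : q ≤ 1)
    (hq₂ : 1 ≤ 2 * q ^ 2) {p : SchauderIndex} (hp : p.level ≤ m) {c : ℝ}
    (hc : |c| ≤ C * q ^ p.level) :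
    Real.exp (-(m + 1 + 2 * (C + 1) ^ 2 * (2 * q ^ 2) ^ m)) ≤
      (gaussianReal 0 (schauderVar p)).real (closedBall c (q ^ (m + p.level))) := by
  have hexponent : (|c| + q ^ (m + p.level)) ^ 2 / (2 * schauderVar p) ≤
      2 * (C + 1) ^ 2 * (2 * q ^ 2) ^ m :=
    calc (|c| + q ^ (m + p.level)) ^ 2 / (2 * schauderVar p)
        ≤ (C * q ^ p.level + q ^ p.level) ^ 2 / (2 * ((2 : ℝ) ^ (p.level + 2))⁻¹) := by
          have hrad : q ^ (m + p.level) ≤ q ^ p.level := pow_le_pow_of_le_one hq₀ hq₁ (by lia)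
          have hvar := inv_two_pow_le_schauderVar p
          gcongr
      _ = 2 * (C + 1) ^ 2 * (2 * q ^ 2) ^ p.level := by
          rw [mul_pow 2 (q ^ 2), pow_add, pow_right_comm q 2]
          field_simp
      _ ≤ 2 * (C + 1) ^ 2 * (2 * q ^ 2) ^ m := by gcongr
  calc Real.exp (-(m + 1 + 2 * (C + 1) ^ 2 * (2 * q ^ 2) ^ m))
      = Real.exp (-m) * Real.exp (-1 - 2 * (C + 1) ^ 2 * (2 * q ^ 2) ^ m) := by
        rw [← Real.exp_add]
        ring_nf
    _ ≤ q ^ (m + p.level) *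
          Real.exp (-1 - (|c - 0| + q ^ (m + p.level)) ^ 2 / (2 * schauderVar p)) := by
        rw [sub_zero]
        gcongr
        exact exp_neg_natCast_le_pow hq₀ hq₁ hq₂ hp
    _ ≤ _ := mul_exp_le_gaussianReal_closedBall 0 (schauderVar_ne_zero p) (schauderVar_le_one p) c
        (by positivity)

lemma exp_neg_le_gaussianReal_closedBall_of_level_ne_zero (hq₀ : 0 ≤ q) (hq₂ : 1 ≤ 2 * q ^ 2)
    {p : SchauderIndex} (hp : p.level ≠ 0) :
    Real.exp (-(4 * Real.exp (-(2 * (2 * q ^ 2) ^ p.level)))) ≤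
      (gaussianReal 0 (schauderVar p)).real (closedBall 0 (q ^ p.level)) := by
  obtain _ | ⟨k, i⟩ := p
  · exact absurd rfl hp
  have hexponent : (q ^ k) ^ 2 / (2 * schauderVar (some ⟨k, i⟩)) = 2 * (2 * q ^ 2) ^ k := by
    rw [schauderVar, mul_pow 2 (q ^ 2), pow_right_comm q 2]
    push_cast
    rw [pow_add]
    field_simp
  have htwo : 2 ≤ 2 * (2 * q ^ 2) ^ k := le_mul_of_one_le_right zero_le_two (one_le_pow₀ hq₂)
  rw [← hexponent] at htwo
  change Real.exp (-(4 * Real.exp (-(2 * (2 * q ^ 2) ^ k)))) ≤ _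
  rw [← hexponent]
  exact exp_neg_exp_le_gaussianReal_closedBall 0 (pow_nonneg hq₀ k) htwo

lemma exp_neg_schauderBoxCost_le (hC : 0 ≤ C) (hq₀ : 0 ≤ q) (hq₁ : q ≤ 1) (hq₂ : 1 ≤ 2 * q ^ 2)
    {p : SchauderIndex} (hη : |schauderCoeff p η| ≤ C * q ^ p.level) :
    Real.exp (-schauderBoxCost C q m p.level) ≤
      (gaussianReal 0 (schauderVar p)).real (schauderBox η q m p) := by
  unfold schauderBox schauderBoxCost
  split_ifs with hp
  · exact exp_neg_le_gaussianReal_closedBall_of_level_le hC hq₀ hq₁ hq₂ hp hη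
  · exact exp_neg_le_gaussianReal_closedBall_of_level_ne_zero hq₀ hq₂ (by lia)

lemma hasSum_schauderBoxCost (C : ℝ) (hq : 1 < 2 * q ^ 2) (m : ℕ) :
    HasSum (fun p : SchauderIndex => schauderBoxCost C q m p.level)
      (2 ^ (m + 1) * (m + 1 + 2 * (C + 1) ^ 2 * (2 * q ^ 2) ^ m) +
        4 * ∑' k, 2 ^ (k + (m + 1)) * Real.exp (-(2 * (2 * q ^ 2) ^ (k + (m + 1))))) := by
  have htail := ((summable_nat_add_iff (m + 1)).2
    (summable_pow_mul_exp_neg_pow 2 two_pos hq)).hasSum.mul_left 4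
  have hlevels := hasSum_ite_le (fun k => 2 ^ k * (m + 1 + 2 * (C + 1) ^ 2 * (2 * q ^ 2) ^ m))
    (w := fun k => 4 * (2 ^ k * Real.exp (-(2 * (2 * q ^ 2) ^ k)))) m htail
  convert hasSum_level (schauderBoxCost_nonneg C q m) (hlevels.congr_fun fun k => ?_) using 1
  · rw [schauderBoxCost, if_pos m.zero_le, ← Finset.sum_mul, geom_sum_eq (by norm_num)]
    ring
  · rw [schauderBoxCost, mul_ite, mul_left_comm]

lemma exists_hasSum_schauderBoxCost_le (C : ℝ) (hq : 1 < 2 * q ^ 2) :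
    ∃ A > 0, ∀ m, ∃ T ≤ A * (4 * q ^ 2) ^ m,
      HasSum (fun p : SchauderIndex => schauderBoxCost C q m p.level) T := by
  have hcost := hasSum_schauderBoxCost C hq
  generalize hg : 2 * q ^ 2 = g at hq hcost
  let f : ℕ → ℝ := fun k => 2 ^ k * Real.exp (-(2 * g ^ k))
  have hf : Summable f := summable_pow_mul_exp_neg_pow 2 two_pos hq
  have hf₀ : ∀ k, 0 ≤ f k := fun k => by positivity
  have hS : 0 ≤ ∑' k, f k := tsum_nonneg hf₀
  have : 0 < (g - 1)⁻¹ := inv_pos.2 (sub_pos.2 hq)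
  refine ⟨2 * ((g - 1)⁻¹ + 1 + 2 * (C + 1) ^ 2) + 4 * ∑' k, f k, by positivity,
    fun m => ⟨_, ?_, hcost m⟩⟩
  have hlow : m + 1 + 2 * (C + 1) ^ 2 * g ^ m ≤ ((g - 1)⁻¹ + 1 + 2 * (C + 1) ^ 2) * g ^ m := by
    linarith [add_one_le_mul_pow hq m]
  have htail : ∑' k, f (k + (m + 1)) ≤ (∑' k, f k) * (2 * g) ^ m :=
    calc ∑' k, f (k + (m + 1)) ≤ ∑' k, f k :=
          tsum_comp_le_tsum_of_inj hf hf₀ (add_left_injective (m + 1))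
      _ ≤ (∑' k, f k) * (2 * g) ^ m :=
          le_mul_of_one_le_right hS (one_le_pow₀ (by linarith))
  calc 2 ^ (m + 1) * (m + 1 + 2 * (C + 1) ^ 2 * g ^ m) + 4 * ∑' k, f (k + (m + 1))
      ≤ 2 ^ (m + 1) * (((g - 1)⁻¹ + 1 + 2 * (C + 1) ^ 2) * g ^ m) +
          4 * ((∑' k, f k) * (2 * g) ^ m) := by gcongr
    _ = (2 * ((g - 1)⁻¹ + 1 + 2 * (C + 1) ^ 2) + 4 * ∑' k, f k) * (2 * g) ^ m := by
        rw [mul_pow]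
        ring
    _ = (2 * ((g - 1)⁻¹ + 1 + 2 * (C + 1) ^ 2) + 4 * ∑' k, f k) * (4 * q ^ 2) ^ m := by
        rw [show 2 * g = 4 * q ^ 2 by rw [← hg]; ring]

namespace IsWienerMeasure

variable {W : Measure PathSpace}

lemma exists_exp_neg_le_measureReal_closedBall (hW : IsWienerMeasure W) (hq₀ : 0 ≤ q)
    (hq₁ : q < 1) (hq₂ : 1 < 2 * q ^ 2) (hη : ∀ p, |schauderCoeff p η| ≤ C * q ^ p.level) :
    ∃ A > 0, ∃ R > 0, ∀ m : ℕ,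
      Real.exp (-(A * (4 * q ^ 2) ^ m)) ≤ W.real (closedBall η (R * q ^ m)) := by
  have := hW.1
  have hC : 0 ≤ C := by simpa [SchauderIndex.level] using (abs_nonneg _).trans (hη none)
  obtain ⟨A, hA, hcost⟩ := exists_hasSum_schauderBoxCost_le C hq₂
  have hR : 0 < 1 + (C + 2) / (1 - q) := by
    have := sub_pos.2 hq₁
    positivity
  refine ⟨A, hA, _, hR, fun m => ?_⟩
  obtain ⟨T, hTA, hT⟩ := hcost m
  have hbox : ∀ p, Real.exp (-schauderBoxCost C q m p.level) ≤
      W.real (schauderCoeff p ⁻¹' schauderBox η q m p) := fun p => by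
    rw [← map_measureReal_apply (measurable_schauderCoeff p) (measurableSet_schauderBox η q m p),
      hW.map_schauderCoeff]
    exact exp_neg_schauderBoxCost_le hC hq₀ hq₁.le hq₂.le (hη p)
  calc Real.exp (-(A * (4 * q ^ 2) ^ m)) ≤ Real.exp (-T) := Real.exp_le_exp.2 (neg_le_neg hTA)
    _ ≤ W.real (⋂ p, schauderCoeff p ⁻¹' schauderBox η q m p) :=
        exp_neg_le_measureReal_iInter_preimage hW.iIndepFun_schauderCoeff
          (fun p => (measurable_schauderCoeff p).aemeasurable)
          (measurableSet_schauderBox η q m) hT hbox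
    _ ≤ W.real (closedBall η ((1 + (C + 2) / (1 - q)) * q ^ m)) :=
        measureReal_mono fun ω hω =>
          dist_le_of_mem_schauderBox hq₀ hq₁ hη (mem_iInter.1 hω)

end IsWienerMeasure

end SmallBall

section Holder

variable {β C : ℝ} {ω : PathSpace}

lemma abs_gridPt_succ_sub {n j : ℕ} (h : j + 1 ≤ n) :
    |(gridPt n (j + 1) : ℝ) - gridPt n j| = (n : ℝ)⁻¹ := by
  rw [coe_gridPt h, coe_gridPt (j.le_succ.trans h), ← sub_div, Nat.cast_succ, add_sub_cancel_left,
    one_div, abs_of_nonneg (by positivity)]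

lemma abs_chordGap_le
    (hω : ∀ x y : unitInterval, |ω.1 x - ω.1 y| ≤ C * |(x : ℝ) - (y : ℝ)| ^ β) {n j : ℕ}
    (hj : j + 2 ≤ n) : |chordGap n j ω| ≤ C * (n : ℝ)⁻¹ ^ β := by
  have hleft := hω (gridPt n (j + 1)) (gridPt n j)
  have hright := hω (gridPt n (j + 2)) (gridPt n (j + 1))
  rw [abs_gridPt_succ_sub (by lia), abs_le] at hleft hright
  rw [chordGap, abs_le]
  constructor <;> linarith

lemma abs_schauderCoeff_le (hβ : 0 ≤ β)
    (hω : ∀ x y : unitInterval, |ω.1 x - ω.1 y| ≤ C * |(x : ℝ) - (y : ℝ)| ^ β)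
    (p : SchauderIndex) : |schauderCoeff p ω| ≤ C * ((2⁻¹ : ℝ) ^ β) ^ p.level := by
  have hnone : |ω.1 1| ≤ C := by simpa [ω.2] using hω 1 0
  obtain _ | ⟨k, i⟩ := p
  · rwa [SchauderIndex.level, pow_zero, mul_one]
  have hC : 0 ≤ C := (abs_nonneg _).trans hnone
  calc |chordGap (2 ^ (k + 1)) (2 * i) ω|
      ≤ C * ((2 ^ (k + 1) : ℕ) : ℝ)⁻¹ ^ β := abs_chordGap_le hω (by lia)
    _ = C * ((2⁻¹ : ℝ) ^ (k + 1)) ^ β := by rw [Nat.cast_pow, Nat.cast_two, inv_pow]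
    _ ≤ C * ((2⁻¹ : ℝ) ^ k) ^ β := by
        have hpow : (2⁻¹ : ℝ) ^ (k + 1) ≤ 2⁻¹ ^ k :=
          pow_le_pow_of_le_one (by norm_num) (by norm_num) k.le_succ
        gcongr
    _ = C * ((2⁻¹ : ℝ) ^ β) ^ k := by rw [Real.rpow_pow_comm (by norm_num)]

end Holder

section LocalOrder

variable {s : ℝ}

lemma exists_eventually_exp_neg_le_measureReal_ball {X : Type*} [PseudoMetricSpace X]
    [MeasurableSpace X] {μ : Measure X} [IsFiniteMeasure μ] {x : X} {q A R : ℝ} (hq₀ : 0 < q)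
    (hq₁ : q < 1) (hA : 0 ≤ A) (hR : 0 < R) (hs : 0 ≤ s)
    (h : ∀ m : ℕ, Real.exp (-(A * (q ^ (-s)) ^ m)) ≤ μ.real (closedBall x (R * q ^ m))) :
    ∃ D ≥ 1, ∀ᶠ ε in 𝓝[>] 0, Real.exp (-(D * ε ^ (-s))) ≤ μ.real (ball x ε) := by
  refine ⟨max 1 (A * q ^ (-s) * R ^ s), le_max_left _ _, ?_⟩
  filter_upwards [Ioc_mem_nhdsGT hR] with ε ⟨hε, hεR⟩
  obtain ⟨n, hn, hn'⟩ :=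
    exists_nat_pow_near_of_lt_one (div_pos hε hR) ((div_le_one hR).2 hεR) hq₀ hq₁
  have hexponent : A * (q ^ (-s)) ^ (n + 1) ≤ max 1 (A * q ^ (-s) * R ^ s) * ε ^ (-s) :=
    calc A * (q ^ (-s)) ^ (n + 1) = A * q ^ (-s) * (q ^ n) ^ (-s) := by
          rw [pow_succ', ← mul_assoc, Real.rpow_pow_comm hq₀.le]
      _ ≤ A * q ^ (-s) * (ε / R) ^ (-s) := by
          gcongr A * q ^ (-s) * ?_
          exact Real.rpow_le_rpow_of_nonpos (div_pos hε hR) hn' (neg_nonpos.2 hs)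
      _ = A * q ^ (-s) * R ^ s * ε ^ (-s) := by
          rw [Real.div_rpow hε.le hR.le, Real.rpow_neg hR.le, div_inv_eq_mul]
          ring
      _ ≤ max 1 (A * q ^ (-s) * R ^ s) * ε ^ (-s) := by
          gcongr
          exact le_max_right _ _
  calc Real.exp (-(max 1 (A * q ^ (-s) * R ^ s) * ε ^ (-s)))
      ≤ Real.exp (-(A * (q ^ (-s)) ^ (n + 1))) := Real.exp_le_exp.2 (neg_le_neg hexponent)
    _ ≤ μ.real (closedBall x (R * q ^ (n + 1))) := h (n + 1)
    _ ≤ μ.real (ball x ε) :=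
        measureReal_mono (closedBall_subset_ball ((lt_div_iff₀' hR).1 hn))

lemma log_neg_log_div_le {D ε p : ℝ} (hD : 1 ≤ D) (hs : 0 ≤ s) (hε₀ : 0 < ε) (hε₁ : ε < 1)
    (hp : Real.exp (-(D * ε ^ (-s))) ≤ p) (hp₁ : p ≤ 1) :
    Real.log (-Real.log p) / -Real.log ε ≤ Real.log D / -Real.log ε + s := by
  have hlogε : 0 < -Real.log ε := neg_pos.2 (Real.log_neg hε₀ hε₁)
  have hp₀ : 0 < p := (Real.exp_pos _).trans_le hp
  have hlogp : -Real.log p ≤ D * ε ^ (-s) := neg_le.1 ((Real.le_log_iff_exp_le hp₀).2 hp)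
  have hloglog : Real.log (-Real.log p) ≤ Real.log D + s * -Real.log ε := by
    -- For `p = 1` the left side is the junk value `log 0 = 0`.
    rcases (neg_nonneg.2 (Real.log_nonpos hp₀.le hp₁)).eq_or_lt with hzero | hpos
    · rw [← hzero, Real.log_zero]
      exact add_nonneg (Real.log_nonneg hD) (mul_nonneg hs hlogε.le)
    · calc Real.log (-Real.log p) ≤ Real.log (D * ε ^ (-s)) := Real.log_le_log hpos hlogp
        _ = Real.log D + s * -Real.log ε := by
            rw [Real.log_mul (by positivity) (by positivity), Real.log_rpow hε₀, neg_mul_comm]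
  rwa [div_le_iff₀ hlogε, add_mul, div_mul_cancel₀ _ hlogε.ne']

lemma upperLocOrd_le_of_eventually_exp_neg_le {μ : Measure PathSpace} [IsProbabilityMeasure μ]
    {η : PathSpace} {D : ℝ} (hD : 1 ≤ D) (hs : 0 ≤ s)
    (h : ∀ᶠ ε in 𝓝[>] 0, Real.exp (-(D * ε ^ (-s))) ≤ μ.real (ball η ε)) :
    upperLocOrd μ η ≤ (s : EReal) := by
  have hlim : Tendsto (fun ε : ℝ => Real.log D / -Real.log ε + s) (𝓝[>] 0) (𝓝 s) := by
    simpa using ((tendsto_neg_atBot_atTop.comp Real.tendsto_log_nhdsGT_zero).const_div_atTop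
      (Real.log D)).add_const s
  rw [← ((continuous_coe_real_ereal.tendsto s).comp hlim).limsup_eq]
  refine limsup_le_limsup ?_
  filter_upwards [h, Ioo_mem_nhdsGT zero_lt_one] with ε hball ⟨hε₀, hε₁⟩
  exact EReal.coe_le_coe_iff.2 (log_neg_log_div_le hD hs hε₀ hε₁ hball measureReal_le_one)

lemma rpow_inv_two_sq (β : ℝ) : ((2⁻¹ : ℝ) ^ β) ^ 2 = 2⁻¹ ^ (2 * β) := by
  rw [← Real.rpow_mul_natCast (by norm_num), Nat.cast_two, mul_comm]

lemma one_lt_two_mul_rpow_inv_two_sq {β : ℝ} (hβ : β < 1 / 2) :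
    1 < 2 * ((2⁻¹ : ℝ) ^ β) ^ 2 := by
  have hlt : (2⁻¹ : ℝ) ^ (1 : ℝ) < 2⁻¹ ^ (2 * β) :=
    Real.rpow_lt_rpow_of_exponent_gt (by norm_num) (by norm_num) (by linarith)
  rw [Real.rpow_one, ← rpow_inv_two_sq] at hlt
  linarith

lemma four_mul_rpow_inv_two_sq {β : ℝ} (hβ : β ≠ 0) :
    4 * ((2⁻¹ : ℝ) ^ β) ^ 2 = ((2⁻¹ : ℝ) ^ β) ^ (-(2 * (β⁻¹ - 1))) := by
  have hexponent : β * -(2 * (β⁻¹ - 1)) = 2 * β - (2 : ℕ) := by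
    push_cast
    field_simp
    ring
  rw [rpow_inv_two_sq, ← Real.rpow_mul (by norm_num), hexponent, Real.rpow_sub (by norm_num),
    Real.rpow_natCast]
  ring

lemma IsWienerMeasure.upperLocOrd_le_of_mem_holderSet {W : Measure PathSpace}
    (hW : IsWienerMeasure W) {β : ℝ} (hβ₀ : 0 < β) (hβ₁ : β < 1 / 2) {η : PathSpace}
    (hη : η ∈ holderSet β) : upperLocOrd W η ≤ ((2 * (β⁻¹ - 1) : ℝ) : EReal) := by
  have := hW.1
  obtain ⟨C, hC⟩ := hη
  have hq₀ : 0 < (2⁻¹ : ℝ) ^ β := by positivity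
  have hq₁ : (2⁻¹ : ℝ) ^ β < 1 := Real.rpow_lt_one (by norm_num) (by norm_num) hβ₀
  have hs : 0 ≤ 2 * (β⁻¹ - 1) :=
    mul_nonneg zero_le_two (sub_nonneg.2 ((one_le_inv₀ hβ₀).2 (by linarith)))
  obtain ⟨A, hA, R, hR, hball⟩ := hW.exists_exp_neg_le_measureReal_closedBall hq₀.le hq₁
    (one_lt_two_mul_rpow_inv_two_sq hβ₁) (abs_schauderCoeff_le hβ₀.le hC)
  rw [four_mul_rpow_inv_two_sq hβ₀.ne'] at hball
  obtain ⟨D, hD, hball'⟩ :=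
    exists_eventually_exp_neg_le_measureReal_ball hq₀ hq₁ hA.le hR hs hball
  exact upperLocOrd_le_of_eventually_exp_neg_le hD hs hball'

end LocalOrder

/-- Upper bound of the upper local order of the Wiener measure on nearly
`α`-Hölder paths: for `α ∈ (0,1/2]` and `ω̄ ∈ C_α^-`,
`overline-ord_loc W(ω̄) ≤ 2(α⁻¹ - 1)`. -/
theorem upper_ord_le_holder (W : Measure PathSpace) (hW : IsWienerMeasure W)
    (α : ℝ) (hα : 0 < α) (hα' : α ≤ 1/2)
    (ωb : PathSpace) (hωb : ωb ∈ holderMinus α) :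
    upperLocOrd W ωb ≤ ((2 * (α⁻¹ - 1) : ℝ) : EReal) := by
  have hlim : Tendsto (fun β : ℝ => ((2 * (β⁻¹ - 1) : ℝ) : EReal)) (𝓝[<] α)
      (𝓝 ((2 * (α⁻¹ - 1) : ℝ) : EReal)) :=
    (continuous_coe_real_ereal.tendsto _).comp
      ((((tendsto_inv₀ hα.ne').sub_const 1).const_mul 2).mono_left nhdsWithin_le_nhds)
  refine ge_of_tendsto hlim ?_
  filter_upwards [Ioo_mem_nhdsLT hα] with β hβ
  exact hW.upperLocOrd_le_of_mem_holderSet hβ.1 (hβ.2.trans_le hα') (mem_iInter₂.1 hωb β hβ)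

end Multifractal
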